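/- For every integer n ≥ 2 and every odd integer k ≥ 3, R(C_k, K_n) ≤ 3k · n^{(k+1)/(k−1)}. -/

import Mathlib

/-- `G` has a copy in `C`: there is an injective graph homomorphism from `G` to `C`,
i.e. `C` contains `G` as a (not necessarily induced) subgraph. -/
def HasCopy {α β : Type*} (G : SimpleGraph α) (C : SimpleGraph β) : Prop :=
  ∃ f : G →g C, Function.Injective f

/-- The Ramsey number `R(G, H)`: the least `N` such that every red-blue colouring of the
edges of `K_N` (encoded by the graph `C` of red edges) contains a red copy of `G` or a
blue copy of `H`. -/
noncomputable def ramseyNumber {α β : Type*} (G : SimpleGraph α) (H : SimpleGraph β) : ℕ :=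
  sInf {N : ℕ | ∀ C : SimpleGraph (Fin N), HasCopy G C ∨ HasCopy H Cᶜ}

/-!
Write `k = 2m + 1`, let `G` contain no `C_k`, and take breadth-first layers from a root.

In layer `i ≤ m`, order the vertices lexicographically by their ancestors, so that the descendants
of any vertex are consecutive. If a layer has no large independent set, it contains an increasing
path on `2m + 1` vertices. Let `j` be minimal such that the ends of this path have the same `j`-th
ancestor. The `j`-th ancestor is then constant along the path, while the `(j - 1)`-st ancestor
changes somewhere and never returns to an earlier value, so some stretch of `2m + 1 - 2j` edges has
ends with distinct `(j - 1)`-st ancestors. The two tree branches joining those ends have total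
length `2j` and close the stretch up to a `C_k`. Hence each of the layers `0, …, m` has an
independent set containing a `1 / (2m)` fraction of it.

These independent sets cannot grow by a factor `q` at each of the `m` steps when `α(G) < q ^ m`, so
some layer has an independent set `I` with `|N[I]| ≤ 2m (2 + q) |I|`. Removing `N[I]` lowers `α(G)`
by at least `|I|`, and iterating gives `|G| ≤ 2m (2 + q) α(G)`. For `R(C_k, K_n)`, take `q ^ m = n`.
-/

open SimpleGraph

section Orders

theorem exists_linearOrder_monotone {V W : Type*} [LinearOrder W] (f : V → W) :
    ∃ _ : LinearOrder V, Monotone f := by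
  obtain ⟨_, -⟩ := exists_wellFoundedLT V
  let toLexProd (v : V) : W ×ₗ V := toLex (f v, v)
  have toLexProd_injective : Function.Injective toLexProd :=
    fun _ _ h ↦ congrArg (fun z ↦ (ofLex z).2) h
  exact ⟨.lift' toLexProd toLexProd_injective,
    fun v w h ↦ Prod.Lex.monotone_fst (toLexProd v) (toLexProd w) h⟩

theorem exists_linearOrder_ordConnected_preimage_iterate {V : Type*} (p : V → V) (i : ℕ) :
    ∃ _ : LinearOrder V, ∀ s ≤ i, ∀ x, (p^[s] ⁻¹' {x}).OrdConnected := by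
  induction i with
  | zero =>
    obtain ⟨_, -⟩ := exists_wellFoundedLT V
    refine ⟨inferInstance, fun s hs x ↦ ?_⟩
    obtain rfl := Nat.le_zero.mp hs
    exact Set.ordConnected_singleton
  | succ i ih =>
    obtain ⟨order, h_conn⟩ := ih
    obtain ⟨lexOrder, p_mono⟩ := exists_linearOrder_monotone p
    refine ⟨lexOrder, fun s hs x ↦ ?_⟩
    cases s with
    | zero => exact Set.ordConnected_singleton
    | succ s =>
      exact @Set.OrdConnected.preimage_mono V V order.toPreorder lexOrder.toPreorder
        (p^[s] ⁻¹' {x}) p (h_conn s (Nat.le_of_succ_le_succ hs) x) p_mono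

end Orders

section IncreasingPaths

variable {V : Type*} {G : SimpleGraph V}

theorem exists_sortedLT_walk_or_isIndepSet [LinearOrder V] {L : Set V} (hL : L.Finite) (T : ℕ) :
    (∃ (u v : V) (w : G.Walk u v), w.length = T ∧ w.support.SortedLT ∧ ∀ x ∈ w.support, x ∈ L) ∨
      ∃ I ⊆ L, G.IsIndepSet I ∧ L.ncard ≤ T * I.ncard := by
  induction T generalizing L with
  | zero =>
    rcases L.eq_empty_or_nonempty with rfl | ⟨v, hv⟩
    · exact .inr ⟨∅, Set.Subset.rfl, by simp, by simp⟩
    · exact .inl ⟨v, v, .nil, rfl, (List.pairwise_singleton _ v).sortedLT, by simpa using hv⟩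
  | succ T ih =>
    let A : Set V := {v ∈ L | ∀ u ∈ L, u < v → ¬G.Adj u v}
    have A_subset : A ⊆ L := Set.sep_subset _ _
    have A_indep : G.IsIndepSet A := fun u hu v hv huv ↦ by
      rcases huv.lt_or_gt with h | h
      · exact hv.2 u hu.1 h
      · exact fun h_adj ↦ hu.2 v hv.1 h h_adj.symm
    rcases ih (hL.subset (Set.sdiff_subset (t := A))) with
      ⟨u, v, w, w_length, w_sorted, w_support⟩ | ⟨I, I_subset, I_indep, hI⟩
    · obtain ⟨u', hu', h_lt, h_adj⟩ : ∃ u' ∈ L, u' < u ∧ G.Adj u' u := by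
        have hu := w_support u w.start_mem_support
        by_contra! h
        exact hu.2 ⟨hu.1, h⟩
      refine .inl ⟨u', v, .cons h_adj w, by simp [w_length], ?_, ?_⟩
      · rw [List.sortedLT_iff_isChain, ← w.cons_tail_support] at w_sorted
        rw [List.sortedLT_iff_isChain, Walk.support_cons, ← w.cons_tail_support]
        exact w_sorted.cons_cons h_lt
      · simpa [hu'] using fun x hx ↦ (w_support x hx).1
    · have L_ncard : L.ncard = A.ncard + (L \ A).ncard := by
        rw [add_comm, Set.ncard_sdiff_add_ncard_of_subset A_subset hL]
      rcases le_total A.ncard I.ncard with h | h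
      · exact .inr ⟨I, I_subset.trans Set.sdiff_subset, I_indep, by lia⟩
      · exact .inr ⟨A, A_subset, A_indep, by nlinarith⟩

theorem mem_Icc_of_mem_support_of_sortedLT [Preorder V] {u v x : V} {w : G.Walk u v}
    (hw : w.support.SortedLT) (hx : x ∈ w.support) : x ∈ Set.Icc u v := by
  induction w with
  | nil => simp [List.mem_singleton.mp hx]
  | cons h w ih =>
    rw [Walk.support_cons, List.sortedLT_iff_pairwise, List.pairwise_cons,
      ← List.sortedLT_iff_pairwise] at hw
    obtain ⟨h_lt, hw⟩ := hw
    rcases List.mem_cons.mp hx with rfl | hx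
    · exact ⟨le_rfl, (h_lt _ w.end_mem_support).le⟩
    · exact ⟨(h_lt x hx).le, (ih hw hx).2⟩

theorem apply_eq_of_mem_support_of_sortedLT [Preorder V] {X : Type*} {c : V → X}
    (hc : ∀ x, (c ⁻¹' {x}).OrdConnected) {u v x : V} {w : G.Walk u v} (hw : w.support.SortedLT)
    (huv : c u = c v) (hx : x ∈ w.support) : c x = c v :=
  (hc (c v)).out huv rfl (mem_Icc_of_mem_support_of_sortedLT hw hx)

theorem exists_isSubwalk_length_eq_apply_ne [Preorder V] {X : Type*} {c : V → X}
    (hc : ∀ x, (c ⁻¹' {x}).OrdConnected) {u v : V} {w : G.Walk u v} (hw : w.support.SortedLT)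
    (huv : c u ≠ c v) {l : ℕ} (hl : 1 ≤ l) (hlw : l ≤ w.length) :
    ∃ (x y : V) (w' : G.Walk x y), w'.IsSubwalk w ∧ w'.length = l ∧ c x ≠ c y := by
  induction w with
  | nil => exact absurd rfl huv
  | @cons u u' v h w ih =>
    have w_sorted : w.support.SortedLT := by
      rw [List.sortedLT_iff_pairwise] at hw ⊢
      exact hw.of_cons
    by_cases hu' : c u' = c v
    · refine ⟨u, _, (Walk.cons h w).take l, Walk.isSubwalk_take _ _, by simpa using hlw, ?_⟩
      obtain ⟨l, rfl⟩ := Nat.exists_eq_add_of_le' hl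
      rw [Walk.getVert_cons_succ]
      rwa [apply_eq_of_mem_support_of_sortedLT hc w_sorted hu' (w.getVert_mem_support l)]
    · rcases hlw.eq_or_lt with rfl | hlw
      · exact ⟨u, v, .cons h w, Walk.isSubwalk_rfl _, rfl, huv⟩
      · obtain ⟨x, y, w', hw', w'_length, hxy⟩ :=
          ih w_sorted hu' (by rw [Walk.length_cons] at hlw; lia)
        exact ⟨x, y, w', hw'.cons h, w'_length, hxy⟩

end IncreasingPaths

section ParentMaps

variable {V : Type*} {G : SimpleGraph V} {r u v : V} {p : V → V} {i j : ℕ}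

/-- `p` chooses a parent for each vertex in a breadth-first search from the root `r`: a neighbour
one step closer to `r`. Its values at `r` and outside the component of `r` are arbitrary. -/
def IsParentMap (G : SimpleGraph V) (r : V) (p : V → V) : Prop :=
  ∀ ⦃v : V⦄ ⦃i : ℕ⦄, G.edist r v = ↑(i + 1) → G.edist r (p v) = i ∧ G.Adj (p v) v

theorem exists_adj_edist_eq (h : G.edist r v = ↑(i + 1)) : ∃ u, G.edist r u = i ∧ G.Adj u v := by
  obtain ⟨w, w_length⟩ := exists_walk_of_edist_eq_coe h
  have w_not_nil : ¬w.Nil := by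
    rw [← Walk.length_eq_zero_iff]
    lia
  have h_adj := w.adj_penultimate w_not_nil
  refine ⟨w.penultimate, le_antisymm ?_ ?_, h_adj⟩
  · have h_length := w.length_dropLast_add_one w_not_nil
    have edist_le_length := edist_le w.dropLast
    rwa [show w.dropLast.length = i by lia] at edist_le_length
  · have h_triangle := G.edist_triangle (u := r) (v := w.penultimate) (w := v)
    rw [h, edist_eq_one_iff_adj.mpr h_adj, Nat.cast_add_one] at h_triangle
    exact (ENat.add_le_add_iff_right ENat.one_ne_top).mp h_triangle

theorem exists_isParentMap (G : SimpleGraph V) (r : V) : ∃ p, IsParentMap G r p := by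
  have exists_parent (v : V) : ∃ u, ∀ i : ℕ, G.edist r v = ↑(i + 1) →
      G.edist r u = i ∧ G.Adj u v := by
    by_cases hv : ∃ i : ℕ, G.edist r v = ↑(i + 1)
    · obtain ⟨i, hi⟩ := hv
      obtain ⟨u, hu⟩ := exists_adj_edist_eq hi
      refine ⟨u, fun i' hi' ↦ ?_⟩
      obtain rfl : i = i' := by simpa [hi] using hi'
      exact hu
    · exact ⟨v, fun i hi ↦ (hv ⟨i, hi⟩).elim⟩
  choose p hp using exists_parent
  exact ⟨p, hp⟩

theorem IsParentMap.iterate_eq_root (hp : IsParentMap G r p) (hv : G.edist r v = i) :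
    p^[i] v = r := by
  induction i generalizing v with
  | zero => exact (edist_eq_zero_iff.mp hv).symm
  | succ i ih => exact ih (hp hv).1

theorem IsParentMap.exists_isPath_length_eq_two_mul (hp : IsParentMap G r p)
    (hu : G.edist r u = i) (hv : G.edist r v = i) (hj : j ≤ i) (h_meet : p^[j] u = p^[j] v)
    (h_ne : ∀ t < j, p^[t] u ≠ p^[t] v) :
    ∃ w : G.Walk u v, w.IsPath ∧ w.length = 2 * j ∧
      ∀ x ∈ w.support, x = u ∨ x = v ∨ G.edist r x < i := by
  induction j generalizing u v i with
  | zero =>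
    obtain rfl : u = v := h_meet
    exact ⟨.nil, .nil, rfl, by simp⟩
  | succ j ih =>
    obtain ⟨i, rfl⟩ := Nat.exists_eq_add_of_le' (Nat.le_of_add_left_le hj)
    obtain ⟨hpu, hpu_adj⟩ := hp hu
    obtain ⟨hpv, hpv_adj⟩ := hp hv
    obtain ⟨w, w_path, w_length, w_support⟩ :=
      ih hpu hpv (Nat.le_of_succ_le_succ hj) h_meet fun t ht ↦ h_ne (t + 1) (by lia)
    have i_lt : (i : ℕ∞) < ↑(i + 1) := by exact_mod_cast i.lt_succ_self
    have support_edist_lt : ∀ x ∈ w.support, G.edist r x < ↑(i + 1) := by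
      intro x hx
      rcases w_support x hx with rfl | rfl | h
      · exact hpu ▸ i_lt
      · exact hpv ▸ i_lt
      · exact h.trans i_lt
    have u_notMem : u ∉ w.support := fun h ↦ (support_edist_lt u h).ne hu
    have v_notMem : v ∉ w.support := fun h ↦ (support_edist_lt v h).ne hv
    have u_ne_v : u ≠ v := h_ne 0 j.succ_pos
    refine ⟨.cons hpu_adj.symm (w.concat hpv_adj), ?_, ?_, ?_⟩
    · refine (w_path.concat v_notMem hpv_adj).cons ?_
      simp [Walk.support_concat, u_notMem, u_ne_v]
    · rw [Walk.length_cons, Walk.length_concat, w_length]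
      ring
    · intro x hx
      simp only [Walk.support_cons, Walk.support_concat, List.mem_cons, List.mem_append,
        List.not_mem_nil, or_false] at hx
      rcases hx with rfl | hx | rfl
      · exact .inl rfl
      · exact .inr (.inr (support_edist_lt x hx))
      · exact .inr (.inl rfl)

end ParentMaps

section OddCycles

variable {V : Type*} {G : SimpleGraph V} {r u v : V} {p : V → V} {i m : ℕ}

/-- The breadth-first layer of vertices at distance exactly `i` from the root `r`. The extended
distance keeps vertices outside the component of `r` out of every layer, where `G.dist` would put
them into layer `0`. -/
def distLayer (G : SimpleGraph V) (r : V) (i : ℕ) : Set V := {v | G.edist r v = i}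

theorem distLayer_zero (G : SimpleGraph V) (r : V) : distLayer G r 0 = {r} := by
  ext v
  exact edist_eq_zero_iff.trans eq_comm

theorem IsParentMap.exists_iterate_eq_forall_lt_ne (hp : IsParentMap G r p)
    (hu : G.edist r u = i) (hv : G.edist r v = i) :
    ∃ j ≤ i, p^[j] u = p^[j] v ∧ ∀ t < j, p^[t] u ≠ p^[t] v := by
  classical
  have h_root : p^[i] u = p^[i] v := by rw [hp.iterate_eq_root hu, hp.iterate_eq_root hv]
  have h_meet : ∃ j, p^[j] u = p^[j] v := ⟨i, h_root⟩
  exact ⟨Nat.find h_meet, Nat.find_min' h_meet h_root, Nat.find_spec h_meet,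
    fun t ht ↦ Nat.find_min h_meet ht⟩

theorem IsParentMap.cycleGraph_isContained_of_isPath (hp : IsParentMap G r p) {j : ℕ}
    {w : G.Walk u v} (hw : w.IsPath) (hw_layer : ∀ x ∈ w.support, x ∈ distLayer G r i)
    (hj : 1 ≤ j) (hji : j ≤ i) (h_meet : p^[j] u = p^[j] v) (h_ne : ∀ t < j, p^[t] u ≠ p^[t] v) :
    cycleGraph (w.length + 2 * j) ⊑ G := by
  have hu := hw_layer u w.start_mem_support
  have hv := hw_layer v w.end_mem_support
  obtain ⟨q, q_path, q_length, q_support⟩ :=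
    hp.exists_isPath_length_eq_two_mul hv hu hji h_meet.symm fun t ht ↦ (h_ne t ht).symm
  have w_length_pos : w.length ≠ 0 := fun h ↦
    h_ne 0 hj (Walk.eq_of_length_eq_zero h)
  have w_q_disjoint : w.support.tail.Disjoint q.support.tail := by
    intro x hx hx'
    rcases q_support x (List.mem_of_mem_tail hx') with rfl | rfl | h
    · exact (List.nodup_cons.mp (q.cons_tail_support ▸ q_path.support_nodup)).1 hx'
    · exact (List.nodup_cons.mp (w.cons_tail_support ▸ hw.support_nodup)).1 hx
    · exact h.ne (hw_layer x (List.mem_of_mem_tail hx))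
  refine (cycleGraph_isContained_iff (by lia)).mpr ⟨u, w.append q, ?_, ?_⟩
  · exact hw.isCycle_append q_path w_q_disjoint (.inr (by lia))
  · rw [Walk.length_append, q_length]

theorem IsParentMap.cycleGraph_isContained_of_sortedLT [Preorder V] (hp : IsParentMap G r p)
    (h_conn : ∀ s ≤ i, ∀ x, (p^[s] ⁻¹' {x}).OrdConnected) {w : G.Walk u v}
    (hw : w.support.SortedLT) (hw_layer : ∀ x ∈ w.support, x ∈ distLayer G r i)
    (hm : 1 ≤ m) (him : i ≤ m) (hw_length : 2 * m ≤ w.length + 1) :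
    cycleGraph (2 * m + 1) ⊑ G := by
  obtain ⟨j, hji, h_meet, h_ne⟩ := hp.exists_iterate_eq_forall_lt_ne
    (hw_layer u w.start_mem_support) (hw_layer v w.end_mem_support)
  have w_path : w.IsPath := (Walk.isPath_def w).mpr hw.nodup
  have hj : j ≠ 0 := by
    rintro rfl
    have w_nil : w.Nil := w_path.nil_iff_eq.mpr h_meet
    rw [← Walk.length_eq_zero_iff] at w_nil
    lia
  have h_window := exists_isSubwalk_length_eq_apply_ne (h_conn (j - 1) (by lia)) hw
    (h_ne (j - 1) (by lia)) (l := 2 * m + 1 - 2 * j) (by lia) (by lia)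
  obtain ⟨x, y, w', w'_sub, w'_length, hxy⟩ := h_window
  have iterate_eq : ∀ z ∈ w'.support, p^[j] z = p^[j] v := fun z hz ↦
    apply_eq_of_mem_support_of_sortedLT (h_conn j hji) hw h_meet (w'_sub.support_subset hz)
  have xy_meet : p^[j] x = p^[j] y :=
    (iterate_eq x w'.start_mem_support).trans (iterate_eq y w'.end_mem_support).symm
  have xy_ne : ∀ t < j, p^[t] x ≠ p^[t] y := by
    intro t ht h_eq
    apply hxy
    obtain ⟨d, hd⟩ := Nat.exists_eq_add_of_le (Nat.le_sub_one_of_lt ht)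
    rw [hd, add_comm, Function.iterate_add_apply, Function.iterate_add_apply, h_eq]
  have h_cycle := hp.cycleGraph_isContained_of_isPath (Walk.isPath_of_isSubwalk w'_sub w_path)
    (fun z hz ↦ hw_layer z (w'_sub.support_subset hz)) (Nat.one_le_iff_ne_zero.mpr hj) hji
    xy_meet xy_ne
  rwa [w'_length, Nat.sub_add_cancel (by lia)] at h_cycle

theorem exists_isIndepSet_ncard_distLayer_le [Finite V] (hfree : (cycleGraph (2 * m + 1)).Free G)
    (r : V) (hm : 1 ≤ m) (him : i ≤ m) :
    ∃ I ⊆ distLayer G r i, G.IsIndepSet I ∧ (distLayer G r i).ncard ≤ 2 * m * I.ncard := by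
  obtain ⟨p, hp⟩ := exists_isParentMap G r
  obtain ⟨_, h_conn⟩ := exists_linearOrder_ordConnected_preimage_iterate p i
  refine (exists_sortedLT_walk_or_isIndepSet (Set.toFinite _) (2 * m)).resolve_left ?_
  rintro ⟨u, v, w, w_length, w_sorted, w_layer⟩
  exact hfree (hp.cycleGraph_isContained_of_sortedLT h_conn w_sorted w_layer hm him (by lia))

end OddCycles

section ClosedNeighborhoods

variable {V : Type*} {G : SimpleGraph V} {I : Set V}

/-- The closed neighbourhood `N[I]` of a set of vertices. -/
def closedNbhd (G : SimpleGraph V) (I : Set V) : Set V := {v | v ∈ I ∨ ∃ u ∈ I, G.Adj u v}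

theorem subset_closedNbhd (G : SimpleGraph V) (I : Set V) : I ⊆ closedNbhd G I := fun _ ↦ .inl

-- At `i = 0` the truncated `i - 1` repeats layer `0`, which is harmless in a union.
theorem closedNbhd_subset_of_subset_distLayer {r : V} {i : ℕ} (hI : I ⊆ distLayer G r i) :
    closedNbhd G I ⊆ distLayer G r (i - 1) ∪ distLayer G r i ∪ distLayer G r (i + 1) := by
  rintro v (hv | ⟨u, hu, huv⟩)
  · exact .inl (.inr (hI hv))
  · have u_edist : G.edist r u = i := hI hu
    have v_le := G.edist_triangle (u := r) (v := u) (w := v)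
    have u_le := G.edist_triangle (u := r) (v := v) (w := u)
    rw [u_edist, edist_eq_one_iff_adj.mpr huv] at v_le
    rw [u_edist, edist_eq_one_iff_adj.mpr huv.symm] at u_le
    obtain ⟨d, hd⟩ := ENat.ne_top_iff_exists.mp (ne_top_of_le_ne_top (by simp) v_le)
    rw [← hd] at v_le u_le
    norm_cast at v_le u_le
    simp only [distLayer, Set.mem_union, Set.mem_ofPred_eq, ← hd, Nat.cast_inj]
    lia

theorem ncard_le_indepNum [Finite V] (hI : G.IsIndepSet I) : I.ncard ≤ G.indepNum := by
  rw [Set.ncard_eq_toFinset_card I]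
  exact IsIndepSet.card_le_indepNum (by rwa [Set.Finite.coe_toFinset])

theorem ncard_add_indepNum_induce_compl_closedNbhd_le [Finite V] (hI : G.IsIndepSet I) :
    I.ncard + (G.induce (closedNbhd G I)ᶜ).indepNum ≤ G.indepNum := by
  obtain ⟨J, J_indep, J_card⟩ := (G.induce (closedNbhd G I)ᶜ).exists_isNIndepSet_indepNum
  let J' : Set V := Subtype.val '' (J : Set ↑(closedNbhd G I)ᶜ)
  have J'_subset : J' ⊆ (closedNbhd G I)ᶜ := Subtype.coe_image_subset _ _
  have J'_indep : G.IsIndepSet J' := Set.Pairwise.image J_indep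
  have J'_ncard : J'.ncard = (G.induce (closedNbhd G I)ᶜ).indepNum := by
    rw [Set.ncard_image_of_injective _ Subtype.val_injective, Set.ncard_coe_finset, J_card]
  have I_J'_disjoint : Disjoint I J' :=
    Set.disjoint_of_subset (subset_closedNbhd G I) J'_subset disjoint_compl_right
  rw [← J'_ncard, ← Set.ncard_union_eq I_J'_disjoint]
  have not_adj_symm : Std.Symm fun u v ↦ ¬G.Adj u v := ⟨fun _ _ h h_adj ↦ h h_adj.symm⟩
  exact ncard_le_indepNum <| Set.pairwise_union_of_symm.mpr
    ⟨hI, J'_indep, fun u hu v hv _ huv ↦ J'_subset hv (.inr ⟨u, hu, huv⟩)⟩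

end ClosedNeighborhoods

section Expansion

variable {V : Type*} {G : SimpleGraph V} {m : ℕ} {q : ℝ}

theorem exists_lt_mul_and_le_of_lt_pow {x : ℕ → ℕ} (hx : 1 ≤ x 0) (hq : 1 ≤ q)
    (h : x m < q ^ m) : ∃ i < m, x (i + 1) < q * x i ∧ x (i - 1) ≤ x i := by
  classical
  have exists_lt : ∃ i, i < m ∧ x (i + 1) < q * x i := by
    by_contra! h_grow
    have h_geom := geom_le (u := fun i ↦ (x i : ℝ)) (zero_le_one.trans hq) m h_grow
    have hx' : (1 : ℝ) ≤ x 0 := by exact_mod_cast hx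
    exact h.not_ge ((le_mul_of_one_le_right (by positivity) hx').trans h_geom)
  obtain ⟨him, h_lt⟩ := Nat.find_spec exists_lt
  refine ⟨Nat.find exists_lt, him, h_lt, ?_⟩
  rcases h_find : Nat.find exists_lt with _ | i
  · rfl
  · have h_ge : q * x i ≤ x (i + 1) := by
      have := Nat.find_min exists_lt (m := i) (by lia)
      push Not at this
      exact this (by lia)
    have := (le_mul_of_one_le_left (Nat.cast_nonneg (x i)) hq).trans h_ge
    exact_mod_cast this

theorem exists_isIndepSet_ncard_closedNbhd_le [Finite V] [Nonempty V]
    (hfree : (cycleGraph (2 * m + 1)).Free G) (hm : 1 ≤ m) (hq : 1 ≤ q) (hα : G.indepNum < q ^ m) :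
    ∃ I : Set V, I.Nonempty ∧ G.IsIndepSet I ∧
      (closedNbhd G I).ncard ≤ 2 * m * (2 + q) * I.ncard := by
  obtain ⟨r⟩ := ‹Nonempty V›
  choose! I I_subset I_indep layer_le using fun i (him : i ≤ m) ↦
    exists_isIndepSet_ncard_distLayer_le hfree r hm him
  have I_zero : 1 ≤ (I 0).ncard := by
    have h_le := layer_le 0 m.zero_le
    rw [distLayer_zero, Set.ncard_singleton] at h_le
    exact Nat.pos_of_mul_pos_left (Nat.zero_lt_of_lt h_le)
  have I_m : (I m).ncard < q ^ m :=
    hα.trans_le' (by exact_mod_cast ncard_le_indepNum (I_indep m le_rfl))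
  obtain ⟨i, him, h_next, h_prev⟩ :=
    exists_lt_mul_and_le_of_lt_pow (x := fun i ↦ (I i).ncard) I_zero hq I_m
  refine ⟨I i, ?_, I_indep i him.le, ?_⟩
  · refine Set.nonempty_of_ncard_ne_zero fun h ↦ h_next.not_ge ?_
    simp [h]
  have h_closedNbhd : (closedNbhd G (I i)).ncard ≤
      (distLayer G r (i - 1)).ncard + (distLayer G r i).ncard + (distLayer G r (i + 1)).ncard :=
    calc (closedNbhd G (I i)).ncard
      _ ≤ _ := Set.ncard_le_ncard (closedNbhd_subset_of_subset_distLayer (I_subset i him.le))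
      _ ≤ _ := Set.ncard_union_le _ _
      _ ≤ _ := by gcongr; exact Set.ncard_union_le _ _
  have h_layers := h_closedNbhd.trans (Nat.add_le_add (Nat.add_le_add
    (layer_le (i - 1) (by lia)) (layer_le i him.le)) (layer_le (i + 1) him))
  calc ((closedNbhd G (I i)).ncard : ℝ)
    _ ≤ 2 * m * (I (i - 1)).ncard + 2 * m * (I i).ncard + 2 * m * (I (i + 1)).ncard := by
      exact_mod_cast h_layers
    _ ≤ 2 * m * (I i).ncard + 2 * m * (I i).ncard + 2 * m * (q * (I i).ncard) := by gcongr
    _ = 2 * m * (2 + q) * (I i).ncard := by ring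

theorem card_le_mul_indepNum [Finite V] (hfree : (cycleGraph (2 * m + 1)).Free G) (hm : 1 ≤ m)
    (hq : 1 ≤ q) (hα : G.indepNum < q ^ m) : Nat.card V ≤ 2 * m * (2 + q) * G.indepNum := by
  induction h : Nat.card V using Nat.strong_induction_on generalizing V with
  | _ c ih =>
  subst h
  rcases isEmpty_or_nonempty V with _ | _
  · rw [Nat.card_of_isEmpty, Nat.cast_zero]
    positivity
  obtain ⟨I, I_nonempty, I_indep, hI⟩ := exists_isIndepSet_ncard_closedNbhd_le hfree hm hq hα
  let N : Set V := closedNbhd G I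
  have N_pos : 0 < N.ncard :=
    (Set.ncard_pos (Set.toFinite N)).mpr (I_nonempty.mono (subset_closedNbhd G I))
  have card_eq : N.ncard + Nat.card ↑Nᶜ = Nat.card V := Set.ncard_add_ncard_compl N
  have indepNum_le : I.ncard + (G.induce Nᶜ).indepNum ≤ G.indepNum :=
    ncard_add_indepNum_induce_compl_closedNbhd_le I_indep
  have rest_le : (Nat.card ↑Nᶜ : ℝ) ≤ 2 * m * (2 + q) * (G.induce Nᶜ).indepNum := by
    refine ih _ (by lia) (fun h ↦ hfree (h.trans ⟨Copy.induce G Nᶜ⟩)) ?_ rfl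
    exact hα.trans_le' (by exact_mod_cast (Nat.le_add_left _ _).trans indepNum_le)
  calc (Nat.card V : ℝ)
    _ = N.ncard + Nat.card ↑Nᶜ := by exact_mod_cast card_eq.symm
    _ ≤ 2 * m * (2 + q) * I.ncard + 2 * m * (2 + q) * (G.induce Nᶜ).indepNum := by gcongr
    _ = 2 * m * (2 + q) * ↑(I.ncard + (G.induce Nᶜ).indepNum) := by push_cast; ring
    _ ≤ 2 * m * (2 + q) * G.indepNum := by gcongr

end Expansion

section RamseyNumbers

theorem hasCopy_iff_isContained {α β : Type*} {G : SimpleGraph α} {H : SimpleGraph β} :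
    HasCopy G H ↔ G ⊑ H :=
  ⟨fun ⟨f, hf⟩ ↦ ⟨⟨f, hf⟩⟩, fun ⟨f⟩ ↦ ⟨f.toHom, f.injective⟩⟩

theorem hasCopy_top_compl_of_le_indepNum {β : Type*} [Finite β] {H : SimpleGraph β} {n : ℕ}
    (hn : n ≤ H.indepNum) : HasCopy (⊤ : SimpleGraph (Fin n)) Hᶜ := by
  obtain ⟨I, hI⟩ := H.exists_isNIndepSet_indepNum
  rw [← isNClique_compl] at hI
  rw [hasCopy_iff_isContained, ← not_cliqueFree_iff_top_isContained]
  exact fun h_free ↦ hI.not_cliqueFree (h_free.mono hn)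

theorem ramseyNumber_top_le {α : Type*} {G : SimpleGraph α} {n N : ℕ}
    (h : ∀ C : SimpleGraph (Fin N), G.Free C → n ≤ C.indepNum) :
    ramseyNumber G (⊤ : SimpleGraph (Fin n)) ≤ N := by
  refine Nat.sInf_le fun C ↦ or_iff_not_imp_left.mpr fun h_free ↦ ?_
  exact hasCopy_top_compl_of_le_indepNum (h C (hasCopy_iff_isContained.not.mp h_free))

theorem ramseyNumber_cycleGraph_top_le {m n : ℕ} {q : ℝ} (hm : 1 ≤ m) (hn : 1 ≤ n) (hq : 1 ≤ q)
    (hnq : n ≤ q ^ m) :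
    (ramseyNumber (cycleGraph (2 * m + 1)) (⊤ : SimpleGraph (Fin n)) : ℝ) ≤
      2 * m * (2 + q) * (n - 1) + 1 := by
  have hn' : (0 : ℝ) ≤ n - 1 := sub_nonneg.mpr (by exact_mod_cast hn)
  let N : ℕ := ⌊2 * m * (2 + q) * (n - 1)⌋₊ + 1
  have N_le : (N : ℝ) ≤ 2 * m * (2 + q) * (n - 1) + 1 := by
    rw [Nat.cast_add_one]
    gcongr
    exact Nat.floor_le (by positivity)
  refine (Nat.cast_le.mpr (ramseyNumber_top_le fun C hfree ↦ ?_)).trans N_le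
  by_contra! hα
  have card_le := card_le_mul_indepNum hfree hm hq (hnq.trans_lt' (by exact_mod_cast hα))
  have lt_card : 2 * m * (2 + q) * (n - 1) < Nat.card (Fin N) := by
    rw [Nat.card_fin, Nat.cast_add_one]
    exact Nat.lt_floor_add_one _
  have indepNum_le : (C.indepNum : ℝ) ≤ n - 1 := by
    rw [le_sub_iff_add_le]
    exact_mod_cast hα
  refine (lt_card.trans_le card_le).not_ge ?_
  gcongr

end RamseyNumbers

theorem stmt_12 (n k : ℕ) (hn : 2 ≤ n) (hk : 3 ≤ k) (hodd : Odd k) :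
    (ramseyNumber (SimpleGraph.cycleGraph k) (⊤ : SimpleGraph (Fin n)) : ℝ) ≤
      3 * k * (n : ℝ) ^ (((k : ℝ) + 1) / ((k : ℝ) - 1)) := by
  obtain ⟨m, rfl⟩ := hodd
  have hm : 1 ≤ m := by lia
  have hn' : (1 : ℝ) ≤ n := by exact_mod_cast one_le_two.trans hn
  let q : ℝ := (n : ℝ) ^ (m : ℝ)⁻¹
  have hq : 1 ≤ q := Real.one_le_rpow hn' (by positivity)
  have q_pow : q ^ m = n := Real.rpow_inv_natCast_pow (by positivity) (by lia)
  have exponent_eq :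
      (((2 * m + 1 : ℕ) : ℝ) + 1) / (((2 * m + 1 : ℕ) : ℝ) - 1) = 1 + (m : ℝ)⁻¹ := by
    push_cast
    field_simp
    ring
  rw [exponent_eq, Real.rpow_one_add' n.cast_nonneg (by positivity)]
  calc (ramseyNumber (cycleGraph (2 * m + 1)) (⊤ : SimpleGraph (Fin n)) : ℝ)
    _ ≤ 2 * m * (2 + q) * (n - 1) + 1 :=
      ramseyNumber_cycleGraph_top_le hm (by lia) hq q_pow.ge
    _ ≤ 2 * m * (2 * q + q) * n + 1 * 1 := by gcongr <;> linarith
    _ ≤ 2 * m * (2 * q + q) * n + 3 * n * q := by gcongr; linarith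
    _ = 3 * (2 * m + 1 : ℕ) * (n * q) := by push_cast; ring
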